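/- Let G be a finite directed graph with nonnegative real arc weights that contains at least one directed cycle, and let P be a shortest u-to-v path for some vertices u, v of G. Then there exists a directed cycle C of minimum total weight among all directed cycles of G such that either C and P are completely vertex-disjoint, or the vertices and arcs shared by C and P form a single common subpath (i.e., a contiguous subpath of P that is also a contiguous subpath of C). -/

import Mathlib

/-!
Take any cycle `C` of minimum weight; one exists because a cycle has no repeated arc, so that
there are only finitely many arc lists of cycles. If `C` misses `P` it is the required cycle.
Otherwise let `b` be the last vertex of `P` lying on `C`. Follow `C` from `b` until it first
returns to `P`, say at `x`. By the choice of `b`, the vertex `x` does not come after `b` on `P`.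
Replacing the part of `C` from `x` to `b` by the segment `P[x, b]` therefore gives a closed walk;
it is a cycle, since the remaining part of `C` is internally disjoint from `P`. It meets `P`
exactly in `P[x, b]`. Its weight is at most that of `C`, because a segment of a shortest path is
no heavier than any walk with the same ends (`exists_path_le`).
-/

/-- A directed walk in a digraph given by an adjacency relation `G`. -/
inductive DiWalk {V : Type*} (G : V → V → Prop) : V → V → Type _
  | nil (u : V) : DiWalk G u u
  | cons {u v x : V} (h : G u v) (p : DiWalk G v x) : DiWalk G u x

namespace DiWalk

variable {V : Type*} {G : V → V → Prop}

/-- The list of arcs of a walk, in order. -/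
def arcs : {u v : V} → DiWalk G u v → List (V × V)
  | _, _, .nil _ => []
  | _, _, @DiWalk.cons _ _ a b _ _ p => (a, b) :: arcs p

/-- The list of vertices visited by a walk, in order (with multiplicity). -/
def support : {u v : V} → DiWalk G u v → List V
  | _, _, .nil a => [a]
  | _, _, @DiWalk.cons _ _ a _ _ _ p => a :: support p

/-- Concatenation of walks. -/
def append : {u v x : V} → DiWalk G u v → DiWalk G v x → DiWalk G u x
  | _, _, _, .nil _, q => q
  | _, _, _, .cons h p, q => .cons h (append p q)

/-- The total weight of a walk: the sum of the weights of its arcs. -/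
def weight (wt : V → V → ℝ) {u v : V} (p : DiWalk G u v) : ℝ :=
  (p.arcs.map fun e => wt e.1 e.2).sum

/-- The number of arcs of a walk. -/
def length {u v : V} (p : DiWalk G u v) : ℕ := p.arcs.length

/-- A walk is a (simple directed) path if it repeats no vertex. -/
def IsPath {u v : V} (p : DiWalk G u v) : Prop := p.support.Nodup

/-- A closed walk is a directed cycle if it is nontrivial and repeats no vertex
other than its common first and last vertex. -/
def IsCycle {u : V} (p : DiWalk G u u) : Prop :=
  1 ≤ p.length ∧ p.support.dropLast.Nodup

end DiWalk

namespace DiWalk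

variable {V : Type*} {G : V → V → Prop}

theorem support_eq_dropLast {u v : V} (p : DiWalk G u v) :
    p.support = p.support.dropLast ++ [v] := by
  induction p with
  | nil => simp [support]
  | cons h p ih =>
    simp only [support]
    rw [ih]
    simp [List.dropLast_cons_of_ne_nil]

theorem support_eq_cons {u v : V} (p : DiWalk G u v) : p.support = u :: p.support.tail := by
  cases p <;> rfl

theorem support_ne_nil {u v : V} (p : DiWalk G u v) : p.support ≠ [] := by
  cases p <;> simp [support]

theorem start_mem {u v : V} (p : DiWalk G u v) : u ∈ p.support := by
  cases p <;> simp [support]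

theorem end_mem {u v : V} (p : DiWalk G u v) : v ∈ p.support := by
  rw [support_eq_dropLast]; simp

theorem support_append {u v x : V} (p : DiWalk G u v) (q : DiWalk G v x) :
    (p.append q).support = p.support.dropLast ++ q.support := by
  induction p with
  | nil => simp [support, append]
  | cons h p ih =>
    simp only [append, support, ih]
    rw [List.dropLast_cons_of_ne_nil p.support_ne_nil, List.cons_append]

theorem support_append_tail {u v x : V} (p : DiWalk G u v) (q : DiWalk G v x) :
    (p.append q).support = p.support ++ q.support.tail := by
  rw [support_append, support_eq_cons q]
  conv_rhs => rw [support_eq_dropLast p]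
  simp

theorem dropLast_support_append {u v x : V} (p : DiWalk G u v) (q : DiWalk G v x) :
    (p.append q).support.dropLast = p.support.dropLast ++ q.support.dropLast := by
  rw [support_append, List.dropLast_append_of_ne_nil q.support_ne_nil]

theorem mem_support_append {u v x z : V} (p : DiWalk G u v) (q : DiWalk G v x) :
    z ∈ (p.append q).support ↔ z ∈ p.support ∨ z ∈ q.support := by
  rw [support_append_tail, List.mem_append]
  constructor
  · rintro (h | h)
    · exact Or.inl h
    · exact Or.inr (List.mem_of_mem_tail h)
  · rintro (h | h)
    · exact Or.inl h
    · rw [support_eq_cons q] at h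
      rcases List.mem_cons.1 h with rfl | h
      · exact Or.inl p.end_mem
      · exact Or.inr h

theorem arcs_append {u v x : V} (p : DiWalk G u v) (q : DiWalk G v x) :
    (p.append q).arcs = p.arcs ++ q.arcs := by
  induction p with
  | nil => simp [arcs, append]
  | cons h p ih => simp [arcs, append, ih]

theorem weight_append (wt : V → V → ℝ) {u v x : V} (p : DiWalk G u v) (q : DiWalk G v x) :
    (p.append q).weight wt = p.weight wt + q.weight wt := by
  simp [weight, arcs_append]

theorem weight_cons (wt : V → V → ℝ) {u v x : V} (h : G u v) (q : DiWalk G v x) :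
    (cons h q).weight wt = wt u v + q.weight wt := by
  simp [weight, arcs]

theorem weight_nonneg {wt : V → V → ℝ} (hw : ∀ a b, 0 ≤ wt a b) {u v : V} (p : DiWalk G u v) :
    0 ≤ p.weight wt := by
  apply List.sum_nonneg
  intro r hr
  obtain ⟨e, -, rfl⟩ := List.mem_map.1 hr
  exact hw _ _

theorem map_fst_arcs {u v : V} (p : DiWalk G u v) :
    p.arcs.map Prod.fst = p.support.dropLast := by
  induction p with
  | nil => simp [arcs, support]
  | cons h p ih =>
    simp [arcs, support, ih, List.dropLast_cons_of_ne_nil p.support_ne_nil]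

theorem map_snd_arcs {u v : V} (p : DiWalk G u v) :
    p.arcs.map Prod.snd = p.support.tail := by
  induction p with
  | nil => simp [arcs, support]
  | cons h p ih =>
    simp only [arcs, support, List.map_cons, ih, List.tail_cons]
    exact (support_eq_cons p).symm

theorem fst_mem_of_mem_arcs {u v : V} {p : DiWalk G u v} {e : V × V} (he : e ∈ p.arcs) :
    e.1 ∈ p.support.dropLast := by
  rw [← map_fst_arcs]; exact List.mem_map_of_mem he

theorem snd_mem_of_mem_arcs {u v : V} {p : DiWalk G u v} {e : V × V} (he : e ∈ p.arcs) :
    e.2 ∈ p.support.tail := by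
  rw [← map_snd_arcs]; exact List.mem_map_of_mem he

/-- A walk that meets `S` can be cut at its first vertex in `S`. -/
theorem exists_first (S : V → Prop) {u v : V} (p : DiWalk G u v) (hS : ∃ z ∈ p.support, S z) :
    ∃ (x : V) (q : DiWalk G u x) (r : DiWalk G x v), p = q.append r ∧ S x ∧
      ∀ z ∈ q.support.dropLast, ¬ S z := by
  induction p with
  | nil a =>
    obtain ⟨z, hz, hSz⟩ := hS
    simp only [support, List.mem_singleton] at hz
    subst hz
    exact ⟨z, nil z, nil z, rfl, hSz, by simp [support]⟩
  | @cons a b c h p ih =>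
    by_cases ha : S a
    · exact ⟨a, nil a, cons h p, rfl, ha, by simp [support]⟩
    · have : ∃ z ∈ p.support, S z := by
        obtain ⟨z, hz, hSz⟩ := hS
        rcases List.mem_cons.1 hz with rfl | hz
        · exact absurd hSz ha
        · exact ⟨z, hz, hSz⟩
      obtain ⟨x, q, r, rfl, hx, hq⟩ := ih this
      refine ⟨x, cons h q, r, rfl, hx, ?_⟩
      intro z hz
      simp only [support] at hz
      rw [List.dropLast_cons_of_ne_nil q.support_ne_nil] at hz
      rcases List.mem_cons.1 hz with rfl | hz
      · exact ha
      · exact hq z hz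

/-- A walk that meets `S` can be cut at its last vertex in `S`. -/
theorem exists_last (S : V → Prop) {u v : V} (p : DiWalk G u v) (hS : ∃ z ∈ p.support, S z) :
    ∃ (x : V) (q : DiWalk G u x) (r : DiWalk G x v), p = q.append r ∧ S x ∧
      ∀ z ∈ r.support.tail, ¬ S z := by
  induction p with
  | nil a =>
    obtain ⟨z, hz, hSz⟩ := hS
    simp only [support, List.mem_singleton] at hz
    subst hz
    exact ⟨z, nil z, nil z, rfl, hSz, by simp [support]⟩
  | @cons a b c h p ih =>
    by_cases hp : ∃ z ∈ p.support, S z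
    · obtain ⟨x, q, r, rfl, hx, hq⟩ := ih hp
      exact ⟨x, cons h q, r, rfl, hx, hq⟩
    · push Not at hp
      obtain ⟨z, hz, hSz⟩ := hS
      rcases List.mem_cons.1 hz with rfl | hz
      · exact ⟨z, nil z, cons h p, rfl, hSz, hp⟩
      · exact absurd hSz (hp z hz)

theorem exists_split {u v x : V} (p : DiWalk G u v) (hx : x ∈ p.support) :
    ∃ (q : DiWalk G u x) (r : DiWalk G x v), p = q.append r := by
  obtain ⟨y, q, r, h, rfl, -⟩ := exists_first (· = x) p ⟨x, hx, rfl⟩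
  exact ⟨q, r, h⟩

theorem exists_cons {u v : V} (p : DiWalk G u v) (hp : 1 ≤ p.length) :
    ∃ (y : V) (h : G u y) (q : DiWalk G y v), p = cons h q := by
  cases p with
  | nil => simp [length, arcs] at hp
  | cons h q => exact ⟨_, h, q, rfl⟩

/-- Shortcutting: every walk can be replaced by a path that is no heavier. -/
theorem exists_path_le {wt : V → V → ℝ} (hw : ∀ a b, 0 ≤ wt a b) {u v : V}
    (p : DiWalk G u v) : ∃ q : DiWalk G u v, q.IsPath ∧ q.weight wt ≤ p.weight wt := by
  induction p with
  | nil a => exact ⟨nil a, by simp [IsPath, support], le_rfl⟩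
  | @cons a b c h p ih =>
    obtain ⟨q, hq, hle⟩ := ih
    rw [weight_cons]
    have hab := hw a b
    by_cases ha : a ∈ q.support
    · obtain ⟨q₁, q₂, rfl⟩ := exists_split q ha
      refine ⟨q₂, ?_, ?_⟩
      · unfold IsPath at hq ⊢
        rw [support_append] at hq
        exact (List.nodup_append.1 hq).2.1
      · rw [weight_append] at hle
        have := weight_nonneg hw q₁
        linarith
    · refine ⟨cons h q, ?_, ?_⟩
      · exact List.nodup_cons.2 ⟨ha, hq⟩
      · rw [weight_cons]; linarith

theorem IsCycle.rotate {o b : V} {p : DiWalk G o b} {q : DiWalk G b o}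
    (h : (p.append q).IsCycle) : (q.append p).IsCycle := by
  obtain ⟨h1, h2⟩ := h
  constructor
  · simp only [length, arcs_append, List.length_append] at h1 ⊢
    omega
  · rw [dropLast_support_append] at h2 ⊢
    exact List.nodup_append_comm.1 h2

theorem exists_min_cycle [Fintype V] (wt : V → V → ℝ)
    (hcyc : ∃ (o : V) (C : DiWalk G o o), C.IsCycle) :
    ∃ (o : V) (C : DiWalk G o o), C.IsCycle ∧
      ∀ (o' : V) (C' : DiWalk G o' o'), C'.IsCycle → C.weight wt ≤ C'.weight wt := by
  classical
  let A : Set (List (V × V)) := {l | ∃ (o : V) (C : DiWalk G o o), C.IsCycle ∧ C.arcs = l}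
  have hA : A.Finite := by
    refine (List.finite_length_le (V × V) (Fintype.card (V × V))).subset ?_
    rintro l ⟨o, C, hC, rfl⟩
    have := hC.2
    rw [← map_fst_arcs] at this
    exact (List.Nodup.of_map _ this).length_le_card
  obtain ⟨o, C, hC⟩ := hcyc
  obtain ⟨l, ⟨o₁, C₁, hC₁, rfl⟩, hmin⟩ := Set.exists_min_image A
    (fun l => (l.map fun e => wt e.1 e.2).sum) hA ⟨_, o, C, hC, rfl⟩
  exact ⟨o₁, C₁, hC₁, fun o' C' hC' => hmin _ ⟨o', C', hC', rfl⟩⟩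

end DiWalk

open DiWalk in
/-- In a finite directed graph with nonnegative real arc weights that
contains at least one directed cycle, given a shortest `u`-to-`v` path `P`, there is a
directed cycle `C` of minimum total weight among all directed cycles such that either
`C` and `P` are completely vertex-disjoint, or the vertices and arcs shared by `C` and
`P` form a single common subpath: a contiguous subpath `Q` of `P` (its support is an
infix of that of `P`) that is also contiguous in `C` (its arcs are a prefix of some
rotation of the arcs of `C`). -/
theorem shortest_cycle_shares_single_subpath
    {V : Type*} [Fintype V] (G : V → V → Prop) (wt : V → V → ℝ)
    (hw : ∀ a b : V, 0 ≤ wt a b)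
    (hcyc : ∃ (o : V) (C : DiWalk G o o), C.IsCycle)
    {u v : V} (P : DiWalk G u v) (hP : P.IsPath)
    (hPmin : ∀ Q : DiWalk G u v, Q.IsPath → P.weight wt ≤ Q.weight wt) :
    ∃ (o : V) (C : DiWalk G o o), C.IsCycle ∧
      (∀ (o' : V) (C' : DiWalk G o' o'), C'.IsCycle → C.weight wt ≤ C'.weight wt) ∧
      ((∀ x : V, x ∈ C.support → x ∉ P.support) ∨
        (∃ (a b : V) (Q : DiWalk G a b),
          Q.support <:+: P.support ∧
          (∃ l : List (V × V), l ~r C.arcs ∧ Q.arcs <+: l) ∧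
          (∀ x : V, (x ∈ C.support ∧ x ∈ P.support) ↔ x ∈ Q.support) ∧
          (∀ e : V × V, (e ∈ C.arcs ∧ e ∈ P.arcs) ↔ e ∈ Q.arcs))) := by
  obtain ⟨o, C, hC, hCmin⟩ := exists_min_cycle wt hcyc
  by_cases hdisj : ∀ x : V, x ∈ C.support → x ∉ P.support
  · exact ⟨o, C, hC, hCmin, Or.inl hdisj⟩
  push Not at hdisj
  obtain ⟨z, hzC, hzP⟩ := hdisj
  -- `b` is the last vertex of `P` on `C`; `C₂ ++ C₁` is `C` rotated to start at `b`.
  obtain ⟨b, P₁, P₂, rfl, hbC, hP₂⟩ := exists_last (· ∈ C.support) P ⟨z, hzP, hzC⟩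
  obtain ⟨C₁, C₂, rfl⟩ := exists_split C hbC
  have hD := hC.rotate
  obtain ⟨y, hby, D, hDeq⟩ := exists_cons _ hD.1
  have hDsub : ∀ z ∈ D.support, z ∈ (C₁.append C₂).support := by
    intro z hz
    have : z ∈ (C₂.append C₁).support := by rw [hDeq]; exact List.mem_cons_of_mem _ hz
    rw [mem_support_append] at this ⊢
    exact this.symm
  -- `x` is the first vertex of `P` met by `C` after leaving `b`.
  obtain ⟨x, D₁, D₂, rfl, hxP, hD₁⟩ := exists_first (· ∈ (P₁.append P₂).support) D
    ⟨b, D.end_mem, (mem_support_append _ _).2 (Or.inl P₁.end_mem)⟩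
  have hxC : x ∈ (C₁.append C₂).support :=
    hDsub _ ((mem_support_append _ _).2 (Or.inl D₁.end_mem))
  have hxP₁ : x ∈ P₁.support := by
    rw [support_append_tail, List.mem_append] at hxP
    exact hxP.resolve_right fun h => hP₂ x h hxC
  obtain ⟨P₀, Q, rfl⟩ := exists_split P₁ hxP₁
  have hQP : ∀ z ∈ Q.support, z ∈ ((P₀.append Q).append P₂).support := fun z hz =>
    (mem_support_append _ _).2 (Or.inl ((mem_support_append _ _).2 (Or.inr hz)))
  have hP₁nodup : (P₀.append Q).support.Nodup := by
    unfold IsPath at hP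
    rw [support_append_tail] at hP
    exact (List.nodup_append.1 hP).1
  have hQnodup : Q.support.Nodup := by
    rw [support_append] at hP₁nodup
    exact (List.nodup_append.1 hP₁nodup).2.1
  have hD₁nodup : D₁.support.dropLast.Nodup := by
    have h := hD.2
    rw [hDeq] at h
    simp only [support] at h
    rw [List.dropLast_cons_of_ne_nil (support_ne_nil _), dropLast_support_append] at h
    exact (List.nodup_append.1 (List.nodup_cons.1 h).2).1
  have hsupp : (Q.append (cons hby D₁)).support = Q.support ++ D₁.support := by
    rw [support_append_tail]; rfl
  have hcycle : (Q.append (cons hby D₁)).IsCycle := by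
    constructor
    · simp only [DiWalk.length, arcs_append, arcs, List.length_append, List.length_cons]
      omega
    · rw [hsupp, List.dropLast_append_of_ne_nil D₁.support_ne_nil]
      refine List.nodup_append'.2 ⟨hQnodup, hD₁nodup, ?_⟩
      intro z hz hz'
      exact hD₁ z hz' (hQP z hz)
  have hQle : Q.weight wt ≤ D₂.weight wt := by
    obtain ⟨R, hR, hRle⟩ := exists_path_le hw ((P₀.append D₂).append P₂)
    have h := (hPmin R hR).trans hRle
    simp only [weight_append] at h
    linarith
  have hwle : (Q.append (cons hby D₁)).weight wt ≤ (C₁.append C₂).weight wt := by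
    have h := congrArg (DiWalk.weight wt) hDeq
    simp only [weight_append, weight_cons] at h ⊢
    linarith
  refine ⟨x, Q.append (cons hby D₁), hcycle,
    fun o' C' hC' => hwle.trans (hCmin o' C' hC'), Or.inr ⟨x, b, Q, ?_, ?_, ?_, ?_⟩⟩
  · rw [support_append_tail, support_append]
    exact ⟨_, _, rfl⟩
  · exact ⟨_, List.IsRotated.refl _, by rw [arcs_append]; exact List.prefix_append _ _⟩
  · intro z
    rw [hsupp, List.mem_append]
    constructor
    · rintro ⟨h | h, hzP'⟩
      · exact h
      · rw [support_eq_dropLast, List.mem_append, List.mem_singleton] at h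
        rcases h with h | rfl
        · exact absurd hzP' (hD₁ z h)
        · exact Q.start_mem
    · exact fun h => ⟨Or.inl h, hQP z h⟩
  · intro e
    rw [arcs_append, List.mem_append]
    constructor
    · rintro ⟨h | h, heP⟩
      · exact h
      · exfalso
        rcases List.mem_cons.1 h with rfl | h
        · -- An arc of `P` leaving `b` enters the part of `P` after `b`, which avoids `C`.
          rw [arcs_append, List.mem_append] at heP
          rcases heP with h' | h'
          · have h₁ := fst_mem_of_mem_arcs h'
            rw [support_eq_dropLast] at hP₁nodup
            exact (List.nodup_append'.1 hP₁nodup).2.2 h₁ (List.mem_singleton_self b)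
          · exact hP₂ y (snd_mem_of_mem_arcs h') (hDsub y (start_mem _))
        · refine hD₁ e.1 (fst_mem_of_mem_arcs h) ?_
          exact List.mem_of_mem_dropLast (fst_mem_of_mem_arcs heP)
    · intro h
      exact ⟨Or.inl h, by simp [arcs_append, h]⟩
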